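/- arXiv:2508.01243 — 3 statements merged into one kernel-verified Lean document; each statement's English description precedes it below -/
import Mathlib

section
/- Let X = (x_1,…,x_n), Y = (y_1,…,y_n) ∈ (ℝ^d)^n and θ ∈ S^{d−1} satisfy P_θ x_1 ≤ … ≤ P_θ x_n and P_θ y_1 ≤ … ≤ P_θ y_n. Then CW_θ²((1/n)Σ_i δ_{x_i}, (1/n)Σ_j δ_{y_j}) = min over P ∈ U ∩ P_θ(X,Y) of Σ_{i=1}^n Σ_{j=1}^n ‖x_i − y_j‖² P_{ij}. -/
open MeasureTheory Filter Topology ProbabilityTheory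
open scoped ENNReal RealInnerProductSpace Classical

noncomputable section

/-- Euclidean space ℝ^d. -/
abbrev Euc (d : ℕ) : Type := EuclideanSpace ℝ (Fin d)

/-- `P2` : Borel probability measures with finite second moment. -/
def P2 {E : Type*} [NormedAddCommGroup E] [MeasurableSpace E] : Set (Measure E) :=
  {μ | IsProbabilityMeasure μ ∧ Integrable (fun x => ‖x‖ ^ 2) μ}

/-- Couplings between two measures. -/
def Coupling {E F : Type*} [MeasurableSpace E] [MeasurableSpace F]
    (μ : Measure E) (ν : Measure F) : Set (Measure (E × F)) :=
  {π | IsProbabilityMeasure π ∧ π.map Prod.fst = μ ∧ π.map Prod.snd = ν}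

/-- Quadratic transport cost of a plan. -/
def tCost {E : Type*} [NormedAddCommGroup E] [MeasurableSpace E]
    (π : Measure (E × E)) : ℝ :=
  ∫ p, ‖p.1 - p.2‖ ^ 2 ∂π

/-- Squared 2-Wasserstein distance. -/
def W2sq {E : Type*} [NormedAddCommGroup E] [MeasurableSpace E] (μ ν : Measure E) : ℝ :=
  sInf (tCost '' Coupling μ ν)

/-- 2-Wasserstein distance. -/
def W2 {E : Type*} [NormedAddCommGroup E] [MeasurableSpace E] (μ ν : Measure E) : ℝ :=
  Real.sqrt (W2sq μ ν)

/-- Optimal transport plans for the quadratic cost. -/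
def OptPlan {E : Type*} [NormedAddCommGroup E] [MeasurableSpace E]
    (μ ν : Measure E) : Set (Measure (E × E)) :=
  {π | π ∈ Coupling μ ν ∧ tCost π = W2sq μ ν}

/-- `Gamma ν μ1 μ2` : probability measures on `E × E × E` whose (1,2)-marginal is an optimal
plan between `ν` and `μ1` and whose (1,3)-marginal is an optimal plan between `ν` and `μ2`. -/
def Gamma {E : Type*} [NormedAddCommGroup E] [MeasurableSpace E]
    (ν μ1 μ2 : Measure E) : Set (Measure (E × E × E)) :=
  {ρ | IsProbabilityMeasure ρ ∧
    ρ.map (fun p => (p.1, p.2.1)) ∈ OptPlan ν μ1 ∧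
    ρ.map (fun p => (p.1, p.2.2)) ∈ OptPlan ν μ2}

/-- Cost `∫ ‖x1 − x2‖² dρ(y, x1, x2)` of a 3-plan. -/
def pivotCost {E : Type*} [NormedAddCommGroup E] [MeasurableSpace E]
    (ρ : Measure (E × E × E)) : ℝ :=
  ∫ p, ‖p.2.1 - p.2.2‖ ^ 2 ∂ρ

/-- Squared ν-based Wasserstein discrepancy. -/
def Wnusq {E : Type*} [NormedAddCommGroup E] [MeasurableSpace E]
    (ν μ1 μ2 : Measure E) : ℝ :=
  sInf (pivotCost '' Gamma ν μ1 μ2)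

/-- ν-based Wasserstein discrepancy. -/
def Wnu {E : Type*} [NormedAddCommGroup E] [MeasurableSpace E]
    (ν μ1 μ2 : Measure E) : ℝ :=
  Real.sqrt (Wnusq ν μ1 μ2)

/-- Weak convergence of a sequence of measures (against bounded continuous functions). -/
def WeakConv {E : Type*} [MeasurableSpace E] [TopologicalSpace E]
    (μs : ℕ → Measure E) (μ : Measure E) : Prop :=
  ∀ f : BoundedContinuousFunction E ℝ,
    Tendsto (fun n => ∫ x, f x ∂(μs n)) atTop (𝓝 (∫ x, f x ∂μ))

/-- Quantile function (pseudo-inverse c.d.f.) of a measure on ℝ. -/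
def quantile (ν : Measure ℝ) (t : ℝ) : ℝ :=
  sInf {s : ℝ | ENNReal.ofReal t ≤ ν (Set.Iic s)}

/-- Pushforward of `μ` by the projection `P_θ : x ↦ ⟪θ, x⟫`. -/
def projLine {d : ℕ} (θ : Euc d) (μ : Measure (Euc d)) : Measure ℝ :=
  μ.map (fun x => ⟪θ, x⟫)

/-- `μ_θ[μ1, μ2]` : the (unique) Wasserstein mean of `Q_θ#μ1` and `Q_θ#μ2`, given by the
explicit quantile formula `[(½ F_{ν1}^{[-1]} + ½ F_{ν2}^{[-1]})·θ]#L_{[0,1]}`. -/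
def pivotMiddle {d : ℕ} (θ : Euc d) (μ1 μ2 : Measure (Euc d)) : Measure (Euc d) :=
  (volume.restrict (Set.Icc (0 : ℝ) 1)).map
    (fun t => ((1 / 2) * quantile (projLine θ μ1) t
      + (1 / 2) * quantile (projLine θ μ2) t) • θ)

/-- Squared Pivot Sliced discrepancy. -/
def PSsq {d : ℕ} (θ : Euc d) (μ1 μ2 : Measure (Euc d)) : ℝ :=
  Wnusq (pivotMiddle θ μ1 μ2) μ1 μ2

/-- Pivot Sliced discrepancy. -/
def PS {d : ℕ} (θ : Euc d) (μ1 μ2 : Measure (Euc d)) : ℝ :=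
  Real.sqrt (PSsq θ μ1 μ2)

/-- `π_θ[μ1, μ2]` : the unique optimal 1D plan between `P_θ#μ1` and `P_θ#μ2`
(co-monotone quantile coupling). -/
def piTheta {d : ℕ} (θ : Euc d) (μ1 μ2 : Measure (Euc d)) : Measure (ℝ × ℝ) :=
  (volume.restrict (Set.Icc (0 : ℝ) 1)).map
    (fun t => (quantile (projLine θ μ1) t, quantile (projLine θ μ2) t))

/-- `Ω_θ(μ1, μ2)` : couplings of `μ1, μ2` whose projection by `(P_θ, P_θ)` is `π_θ[μ1, μ2]`. -/
def OmegaTheta {d : ℕ} (θ : Euc d) (μ1 μ2 : Measure (Euc d)) :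
    Set (Measure (Euc d × Euc d)) :=
  {ω | ω ∈ Coupling μ1 μ2 ∧
    ω.map (fun p => (⟪θ, p.1⟫, ⟪θ, p.2⟫)) = piTheta θ μ1 μ2}

/-- Squared constrained Wasserstein discrepancy `CW_θ²`. -/
def CWsq {d : ℕ} (θ : Euc d) (μ1 μ2 : Measure (Euc d)) : ℝ :=
  sInf (tCost '' OmegaTheta θ μ1 μ2)

/-- Wasserstein means: minimisers of `μ ↦ W₂²(μ1, μ) + W₂²(μ, μ2)` over `P2`. -/
def WMean {d : ℕ} (μ1 μ2 : Measure (Euc d)) : Set (Measure (Euc d)) :=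
  {μ | μ ∈ (P2 : Set (Measure (Euc d))) ∧
    ∀ μ' ∈ (P2 : Set (Measure (Euc d))),
      W2sq μ1 μ + W2sq μ μ2 ≤ W2sq μ1 μ' + W2sq μ' μ2}

/-- Uniform empirical measure `1/n ∑ δ_{x_i}`. -/
def empMeasure {d n : ℕ} (x : Fin n → Euc d) : Measure (Euc d) :=
  (n : ℝ≥0∞)⁻¹ • ∑ i, Measure.dirac (x i)

/-- Doubly "stochastic" matrices with row and column sums `1/n`. -/
def Umat (n : ℕ) : Set (Matrix (Fin n) (Fin n) ℝ) :=
  {P | (∀ i j, 0 ≤ P i j) ∧ (∀ i, ∑ j, P i j = 1 / n) ∧ (∀ j, ∑ i, P i j = 1 / n)}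

/-- The constraint set `P_θ(X, Y)` : matrices exchanging, between each ambiguity group
`I_a = {i : ⟪θ, x i⟫ = s}` and `J_b = {j : ⟪θ, y j⟫ = t}`, exactly the mass
`#(I_a ∩ J_b)/n` prescribed by the 1D optimal plan. -/
def PthetaSet {d n : ℕ} (θ : Euc d) (x y : Fin n → Euc d) :
    Set (Matrix (Fin n) (Fin n) ℝ) :=
  {P | ∀ s t : ℝ,
    ∑ i ∈ Finset.univ.filter (fun i => (⟪θ, x i⟫ : ℝ) = s),
      ∑ j ∈ Finset.univ.filter (fun j => (⟪θ, y j⟫ : ℝ) = t), P i j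
      = ((Finset.univ.filter
          (fun k => (⟪θ, x k⟫ : ℝ) = s ∧ (⟪θ, y k⟫ : ℝ) = t)).card : ℝ) / n}

lemma aux_map_sum_dirac {ι α β : Type*} [MeasurableSpace α] [MeasurableSpace β] {f : α → β}
    (hf : Measurable f) (s : Finset ι) (c : ι → ℝ≥0∞) (p : ι → α) :
    (∑ i ∈ s, c i • Measure.dirac (p i)).map f = ∑ i ∈ s, c i • Measure.dirac (f (p i)) := by
  rw [← Measure.mapₗ_apply_of_measurable hf, map_sum]
  refine Finset.sum_congr rfl fun i _ => ?_
  rw [map_smul, Measure.mapₗ_apply_of_measurable hf, Measure.map_dirac' hf]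

lemma aux_emp {d n : ℕ} (x : Fin n → Euc d) :
    empMeasure x = ∑ i, (n : ℝ≥0∞)⁻¹ • Measure.dirac (x i) := by
  rw [empMeasure, Finset.smul_sum]

lemma aux_meas {d : ℕ} (θ : Euc d) : Measurable (fun x : Euc d => (⟪θ, x⟫ : ℝ)) := by
  fun_prop

lemma aux_projLine {d n : ℕ} (θ : Euc d) (x : Fin n → Euc d) :
    projLine θ (empMeasure x) = ∑ i, (n : ℝ≥0∞)⁻¹ • Measure.dirac (⟪θ, x i⟫ : ℝ) := by
  rw [projLine, aux_emp, aux_map_sum_dirac (aux_meas θ)]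

lemma aux_cdf {n : ℕ} (u : Fin n → ℝ) (s : ℝ) :
    (∑ i, (n : ℝ≥0∞)⁻¹ • Measure.dirac (u i)) (Set.Iic s)
      = (n : ℝ≥0∞)⁻¹ * ((Finset.univ.filter (fun i => u i ≤ s)).card : ℝ≥0∞) := by
  simp only [Measure.coe_finsetSum, Finset.sum_apply, Measure.smul_apply, smul_eq_mul,
    measurableSet_Iic, Measure.dirac_apply', ← Finset.mul_sum]
  congr 1
  rw [Finset.card_filter]
  push_cast
  refine Finset.sum_congr rfl fun i _ => ?_
  simp [Set.indicator_apply]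

lemma aux_quantile {n : ℕ} (hn : 0 < n) (u : Fin n → ℝ) (hu : Monotone u) (k : Fin n) (t : ℝ)
    (ht : t ∈ Set.Ioc ((k : ℝ) / n) (((k : ℝ) + 1) / n)) :
    quantile (∑ i, (n : ℝ≥0∞)⁻¹ • Measure.dirac (u i)) t = u k := by
  have hn' : (0 : ℝ) < n := by exact_mod_cast hn
  have : {s : ℝ | ENNReal.ofReal t ≤
      (∑ i, (n : ℝ≥0∞)⁻¹ • Measure.dirac (u i)) (Set.Iic s)} = Set.Ici (u k) := by
    ext s
    rw [Set.mem_ofPred_eq, aux_cdf, Set.mem_Ici]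
    set c := (Finset.univ.filter (fun i => u i ≤ s)).card with hc
    have e : (n : ℝ≥0∞)⁻¹ * (c : ℝ≥0∞) = ENNReal.ofReal ((c : ℝ) / n) := by
      rw [ENNReal.ofReal_div_of_pos hn', ENNReal.ofReal_natCast, ENNReal.ofReal_natCast,
        ENNReal.div_eq_inv_mul]
    rw [e, ENNReal.ofReal_le_ofReal_iff (by positivity)]
    constructor
    · intro h
      by_contra hlt
      push Not at hlt
      have h1 : c ≤ (k : ℕ) := by
        rw [hc, ← Fin.card_Iio k]
        apply Finset.card_le_card
        intro i hi
        simp only [Finset.mem_filter, Finset.mem_univ, true_and] at hi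
        simp only [Finset.mem_Iio]
        by_contra hki
        push Not at hki
        exact absurd (hu hki) (by linarith)
      have h2 : (c : ℝ) / n ≤ (k : ℝ) / n := by
        gcongr
      linarith [ht.1]
    · intro h
      have h1 : (k : ℕ) + 1 ≤ c := by
        rw [hc, ← Fin.card_Iic k]
        apply Finset.card_le_card
        intro i hi
        simp only [Finset.mem_Iic] at hi
        simp only [Finset.mem_filter, Finset.mem_univ, true_and]
        exact (hu hi).trans h
      have h2 : ((k : ℝ) + 1) / n ≤ (c : ℝ) / n := by
        gcongr
        exact_mod_cast h1
      linarith [ht.2]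
  rw [quantile, this, csInf_Ici]

lemma aux_union {n : ℕ} (hn : 0 < n) :
    (⋃ k : Fin n, Set.Ioc ((k : ℝ) / n) (((k : ℝ) + 1) / n)) = Set.Ioc (0 : ℝ) 1 := by
  have hn' : (0 : ℝ) < n := by exact_mod_cast hn
  ext t
  simp only [Set.mem_iUnion, Set.mem_Ioc]
  constructor
  · rintro ⟨k, h1, h2⟩
    refine ⟨lt_of_le_of_lt (by positivity) h1, h2.trans ?_⟩
    rw [div_le_one hn']
    exact_mod_cast k.2
  · rintro ⟨h0, h1⟩
    have hp : 0 < ⌈t * n⌉₊ := Nat.ceil_pos.2 (by positivity)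
    have hle : ⌈t * n⌉₊ ≤ n := Nat.ceil_le.2 (by nlinarith)
    refine ⟨⟨⌈t * n⌉₊ - 1, by omega⟩, ?_, ?_⟩
    · rw [div_lt_iff₀ hn']
      apply Nat.lt_ceil.1
      simp only
      omega
    · rw [le_div_iff₀ hn']
      have : (((⌈t * n⌉₊ - 1 : ℕ) : ℝ) + 1) = ⌈t * n⌉₊ := by
        rw [Nat.cast_sub (by omega)]; simp
      simp only [this]
      exact Nat.le_ceil _

lemma aux_piTheta {d n : ℕ} (hn : 0 < n) (x y : Fin n → Euc d) (θ : Euc d)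
    (hx : Monotone fun i => (⟪θ, x i⟫ : ℝ)) (hy : Monotone fun i => (⟪θ, y i⟫ : ℝ)) :
    piTheta θ (empMeasure x) (empMeasure y)
      = ∑ k, (n : ℝ≥0∞)⁻¹ • Measure.dirac ((⟪θ, x k⟫ : ℝ), (⟪θ, y k⟫ : ℝ)) := by
  have hn' : (0 : ℝ) < n := by exact_mod_cast hn
  have hdisj : Pairwise (Function.onFun Disjoint
      fun k : Fin n => Set.Ioc ((k : ℝ) / n) (((k : ℝ) + 1) / n)) := by
    intro k l hkl
    rw [Function.onFun, Set.disjoint_left]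
    rintro t ⟨h1, h2⟩ ⟨h3, h4⟩
    rw [div_lt_iff₀ hn'] at h1 h3
    rw [le_div_iff₀ hn'] at h2 h4
    apply hkl
    have a : (k : ℕ) < l + 1 := by
      have : (k : ℝ) < l + 1 := by linarith
      exact_mod_cast this
    have b : (l : ℕ) < k + 1 := by
      have : (l : ℝ) < k + 1 := by linarith
      exact_mod_cast this
    ext; omega
  rw [piTheta, ← restrict_Ioc_eq_restrict_Icc, ← aux_union hn,
    Measure.restrict_iUnion hdisj (fun _ => measurableSet_Ioc), aux_projLine, aux_projLine]
  have key : ∀ k : Fin n, (fun t => (quantile (∑ i, (n : ℝ≥0∞)⁻¹ • Measure.dirac (⟪θ, x i⟫ : ℝ)) t,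
      quantile (∑ i, (n : ℝ≥0∞)⁻¹ • Measure.dirac (⟪θ, y i⟫ : ℝ)) t))
      =ᵐ[volume.restrict (Set.Ioc ((k : ℝ) / n) (((k : ℝ) + 1) / n))]
      fun _ => ((⟪θ, x k⟫ : ℝ), (⟪θ, y k⟫ : ℝ)) := by
    intro k
    filter_upwards [ae_restrict_mem measurableSet_Ioc] with t ht
    rw [aux_quantile hn _ hx k t ht, aux_quantile hn _ hy k t ht]
  rw [Measure.map_sum (aemeasurable_sum_measure_iff.2 fun k => 
    (aemeasurable_const.congr (key k).symm)), Measure.sum_fintype]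
  refine Finset.sum_congr rfl fun k _ => ?_
  rw [Measure.map_congr (key k), Measure.map_const, Measure.restrict_apply_univ, Real.volume_Ioc]
  congr 1
  rw [show ((k : ℝ) + 1) / n - k / n = (n : ℝ)⁻¹ by field_simp; ring, ENNReal.ofReal_inv_of_pos hn',
    ENNReal.ofReal_natCast]

lemma aux_ofReal_inv {n : ℕ} (hn : 0 < n) : ENNReal.ofReal (1 / (n : ℝ)) = (n : ℝ≥0∞)⁻¹ := by
  have hn' : (0 : ℝ) < n := by exact_mod_cast hn
  rw [one_div, ENNReal.ofReal_inv_of_pos hn', ENNReal.ofReal_natCast]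

lemma aux_plan_fst {n : ℕ} {α : Type*} [MeasurableSpace α] (hn : 0 < n)
    (Q : Matrix (Fin n) (Fin n) ℝ) (hQ : Q ∈ Umat n) (x : Fin n → α) :
    ∑ p : Fin n × Fin n, ENNReal.ofReal (Q p.1 p.2) • Measure.dirac (x p.1)
      = ∑ i, (n : ℝ≥0∞)⁻¹ • Measure.dirac (x i) := by
  rw [Fintype.sum_prod_type]
  refine Finset.sum_congr rfl fun i _ => ?_
  simp only
  rw [← Finset.sum_smul, ← ENNReal.ofReal_sum_of_nonneg (fun j _ => hQ.1 i j), hQ.2.1 i,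
    aux_ofReal_inv hn]

lemma aux_plan_snd {n : ℕ} {α : Type*} [MeasurableSpace α] (hn : 0 < n)
    (Q : Matrix (Fin n) (Fin n) ℝ) (hQ : Q ∈ Umat n) (y : Fin n → α) :
    ∑ p : Fin n × Fin n, ENNReal.ofReal (Q p.1 p.2) • Measure.dirac (y p.2)
      = ∑ i, (n : ℝ≥0∞)⁻¹ • Measure.dirac (y i) := by
  rw [Fintype.sum_prod_type_right]
  refine Finset.sum_congr rfl fun i _ => ?_
  simp only
  rw [← Finset.sum_smul, ← ENNReal.ofReal_sum_of_nonneg (fun j _ => hQ.1 j i), hQ.2.2 i,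
    aux_ofReal_inv hn]

lemma aux_plan_proj {n : ℕ} (hn : 0 < n)
    (Q : Matrix (Fin n) (Fin n) ℝ) (hQ : Q ∈ Umat n) (u v : Fin n → ℝ)
    (h : ∀ s t : ℝ, ∑ i ∈ Finset.univ.filter (fun i => u i = s),
      ∑ j ∈ Finset.univ.filter (fun j => v j = t), Q i j
      = ((Finset.univ.filter (fun k => u k = s ∧ v k = t)).card : ℝ) / n) :
    ∑ p : Fin n × Fin n, ENNReal.ofReal (Q p.1 p.2) • Measure.dirac (u p.1, v p.2)
      = ∑ k, (n : ℝ≥0∞)⁻¹ • Measure.dirac (u k, v k) := by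
  have hn' : (0 : ℝ) < n := by exact_mod_cast hn
  rw [← Finset.sum_fiberwise_of_maps_to (s := (Finset.univ : Finset (Fin n × Fin n)))
    (t := Finset.univ.image u ×ˢ Finset.univ.image v) (g := fun p => (u p.1, v p.2)) (by simp),
    ← Finset.sum_fiberwise_of_maps_to (s := (Finset.univ : Finset (Fin n)))
    (t := Finset.univ.image u ×ˢ Finset.univ.image v) (g := fun p => (u p, v p)) (by simp)]
  refine Finset.sum_congr rfl fun z _ => ?_
  obtain ⟨s, t⟩ := z
  have e1 : ∑ p ∈ (Finset.univ : Finset (Fin n × Fin n)).filter (fun p => (u p.1, v p.2) = (s, t)),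
      ENNReal.ofReal (Q p.1 p.2) • Measure.dirac (u p.1, v p.2)
      = (∑ p ∈ (Finset.univ : Finset (Fin n × Fin n)).filter (fun p => (u p.1, v p.2) = (s, t)),
        ENNReal.ofReal (Q p.1 p.2)) • Measure.dirac (s, t) := by
    rw [Finset.sum_smul]
    refine Finset.sum_congr rfl fun p hp => ?_
    rw [(Finset.mem_filter.1 hp).2]
  have e2 : ∑ p ∈ (Finset.univ : Finset (Fin n)).filter (fun p => (u p, v p) = (s, t)),
      (n : ℝ≥0∞)⁻¹ • Measure.dirac (u p, v p)
      = (∑ p ∈ (Finset.univ : Finset (Fin n)).filter (fun p => (u p, v p) = (s, t)),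
        (n : ℝ≥0∞)⁻¹) • Measure.dirac (s, t) := by
    rw [Finset.sum_smul]
    refine Finset.sum_congr rfl fun p hp => ?_
    rw [(Finset.mem_filter.1 hp).2]
  rw [e1, e2]
  congr 1
  rw [← ENNReal.ofReal_sum_of_nonneg (fun p _ => hQ.1 p.1 p.2)]
  have e3 : (Finset.univ : Finset (Fin n × Fin n)).filter (fun p => (u p.1, v p.2) = (s, t))
      = Finset.univ.filter (fun i => u i = s) ×ˢ Finset.univ.filter (fun j => v j = t) := by
    ext p; simp
  rw [e3, Finset.sum_product, h s t, Finset.sum_const, nsmul_eq_mul,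
    ENNReal.ofReal_div_of_pos hn', ENNReal.ofReal_natCast, ENNReal.ofReal_natCast,
    ENNReal.div_eq_inv_mul, mul_comm]
  simp only [Prod.mk.injEq]

lemma aux_emp_prob {d n : ℕ} (hn : 0 < n) (x : Fin n → Euc d) :
    IsProbabilityMeasure (empMeasure x) := by
  constructor
  rw [aux_emp]
  simp only [Measure.coe_finsetSum, Finset.sum_apply, Measure.smul_apply, smul_eq_mul,
    measure_univ, mul_one, Finset.sum_const, Finset.card_univ, Fintype.card_fin, nsmul_eq_mul]
  exact ENNReal.mul_inv_cancel (by exact_mod_cast hn.ne') (ENNReal.natCast_ne_top n)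

lemma aux_forward {d n : ℕ} (hn : 0 < n)
    (x y : Fin n → Euc d) (θ : Euc d)
    (hx : Monotone fun i => (⟪θ, x i⟫ : ℝ)) (hy : Monotone fun i => (⟪θ, y i⟫ : ℝ))
    (Q : Matrix (Fin n) (Fin n) ℝ) (hQ : Q ∈ Umat n ∩ PthetaSet θ x y) :
    ∃ ω ∈ OmegaTheta θ (empMeasure x) (empMeasure y),
      tCost ω = ∑ i, ∑ j, ‖x i - y j‖ ^ 2 * Q i j := by
  set ω : Measure (Euc d × Euc d) := ∑ p : Fin n × Fin n,
    ENNReal.ofReal (Q p.1 p.2) • Measure.dirac (x p.1, y p.2) with hω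
  have h1 : ω.map Prod.fst = empMeasure x := by
    rw [hω, aux_map_sum_dirac measurable_fst, aux_emp]
    exact aux_plan_fst hn Q hQ.1 x
  have h2 : ω.map Prod.snd = empMeasure y := by
    rw [hω, aux_map_sum_dirac measurable_snd, aux_emp]
    exact aux_plan_snd hn Q hQ.1 y
  refine ⟨ω, ⟨⟨⟨?_⟩, h1, h2⟩, ?_⟩, ?_⟩
  · have := (aux_emp_prob hn x).measure_univ
    rwa [← h1, Measure.map_apply measurable_fst MeasurableSet.univ, Set.preimage_univ] at this
  · rw [aux_piTheta hn x y θ hx hy, hω, aux_map_sum_dirac (by fun_prop)]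
    exact aux_plan_proj hn Q hQ.1 (fun i => ⟪θ, x i⟫) (fun i => ⟪θ, y i⟫) hQ.2
  · rw [tCost, hω, integral_finsetSum_measure, Fintype.sum_prod_type]
    · refine Finset.sum_congr rfl fun i _ => Finset.sum_congr rfl fun j _ => ?_
      rw [integral_smul_measure, integral_dirac, ENNReal.toReal_ofReal (hQ.1.1 i j), smul_eq_mul,
        mul_comm]
    · intro p _
      exact (integrable_dirac (by simp)).smul_measure ENNReal.ofReal_ne_top

/-- multiplicity -/
def auxMult {n : ℕ} {α : Type*} (x : Fin n → α) (a : α) : ℝ :=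
  ((Finset.univ.filter (fun i => x i = a)).card : ℝ)

lemma auxMult_pos {n : ℕ} {α : Type*} (x : Fin n → α) (i : Fin n) : 0 < auxMult x (x i) := by
  rw [auxMult]
  exact_mod_cast Finset.card_pos.2 ⟨i, by simp⟩

lemma aux_sum_mult {n : ℕ} {α : Type*} [DecidableEq α] (x : Fin n → α) (g : α → ℝ) :
    ∑ j, g (x j) / auxMult x (x j) = ∑ b ∈ Finset.univ.image x, g b := by
  rw [← Finset.sum_fiberwise_of_maps_to (s := (Finset.univ : Finset (Fin n)))
    (t := Finset.univ.image x) (g := x) (by simp)]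
  refine Finset.sum_congr rfl fun b hb => ?_
  obtain ⟨i, -, rfl⟩ := Finset.mem_image.1 hb
  rw [Finset.sum_congr rfl (g := fun _ => g (x i) / auxMult x (x i))
    (fun j hj => by rw [(Finset.mem_filter.1 hj).2]), Finset.sum_const, nsmul_eq_mul]
  have := auxMult_pos x i
  have e : ((Finset.univ.filter (fun j => x j = x i)).card : ℝ) = auxMult x (x i) := by
    rw [auxMult]; congr!
  rw [e]
  field_simp

lemma aux_emp_singleton {n : ℕ} {α : Type*} [MeasurableSpace α] [MeasurableSingletonClass α]
    (x : Fin n → α) (a : α) :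
    (∑ i, (n : ℝ≥0∞)⁻¹ • Measure.dirac (x i)).real {a} = auxMult x a / n := by
  rw [Measure.real]
  simp only [Measure.coe_finsetSum, Finset.sum_apply, Measure.smul_apply, smul_eq_mul,
    measurableSet_singleton, Measure.dirac_apply', ← Finset.mul_sum]
  rw [auxMult, Finset.card_filter]
  simp only [Set.indicator_apply, Set.mem_singleton_iff, Pi.one_apply]
  rw [ENNReal.toReal_mul, ENNReal.toReal_sum (by intro i _; split_ifs <;> simp)]
  rw [ENNReal.toReal_inv, ENNReal.toReal_natCast, div_eq_inv_mul]
  push_cast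
  congr 1
  refine Finset.sum_congr rfl fun i _ => ?_
  split_ifs <;> simp

lemma aux_emp_ae {d n : ℕ} (x : Fin n → Euc d) :
    ∀ᵐ a ∂(empMeasure x), a ∈ Finset.univ.image x := by
  have hm : MeasurableSet ((Finset.univ.image x : Finset (Euc d)) : Set (Euc d))ᶜ :=
    (Finset.measurableSet _).compl
  rw [ae_iff]
  change empMeasure x ((Finset.univ.image x : Finset (Euc d)) : Set (Euc d))ᶜ = 0
  rw [aux_emp]
  simp only [Measure.coe_finsetSum, Finset.sum_apply, Measure.smul_apply, smul_eq_mul,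
    hm, Measure.dirac_apply']
  refine Finset.sum_eq_zero fun i _ => ?_
  simp

lemma aux_integral {d n : ℕ} (x y : Fin n → Euc d) (ω : Measure (Euc d × Euc d))
    (hω : ω ∈ Coupling (empMeasure x) (empMeasure y)) (F : Euc d × Euc d → ℝ) :
    ∫ p, F p ∂ω = ∑ a ∈ Finset.univ.image x, ∑ b ∈ Finset.univ.image y,
      F (a, b) * ω.real {(a, b)} := by
  have := hω.1
  have h1 : ∀ᵐ p ∂ω, p.1 ∈ Finset.univ.image x :=
    ae_of_ae_map measurable_fst.aemeasurable (by rw [hω.2.1]; exact aux_emp_ae x)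
  have h2 : ∀ᵐ p ∂ω, p.2 ∈ Finset.univ.image y :=
    ae_of_ae_map measurable_snd.aemeasurable (by rw [hω.2.2]; exact aux_emp_ae y)
  rw [← setIntegral_eq_integral_of_ae_compl_eq_zero
    (s := ((Finset.univ.image x ×ˢ Finset.univ.image y : Finset (Euc d × Euc d)) : Set _)),
    setIntegral_finset _ IntegrableOn.finset, Finset.sum_product]
  · simp only [smul_eq_mul, mul_comm]
  · filter_upwards [h1, h2] with p hp1 hp2 hp
    exact absurd (Finset.mem_coe.2 (Finset.mem_product.2 ⟨hp1, hp2⟩)) hp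

lemma aux_backward {d n : ℕ} (hn : 0 < n)
    (x y : Fin n → Euc d) (θ : Euc d)
    (hx : Monotone fun i => (⟪θ, x i⟫ : ℝ)) (hy : Monotone fun i => (⟪θ, y i⟫ : ℝ))
    (ω : Measure (Euc d × Euc d)) (hω : ω ∈ OmegaTheta θ (empMeasure x) (empMeasure y)) :
    ∃ Q ∈ Umat n ∩ PthetaSet θ x y,
      tCost ω = ∑ i, ∑ j, ‖x i - y j‖ ^ 2 * Q i j := by
  have hc := hω.1
  have := hc.1
  set Q : Matrix (Fin n) (Fin n) ℝ := fun i j =>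
    ω.real {(x i, y j)} / auxMult y (y j) / auxMult x (x i) with hQ
  have hF : ∀ F : Euc d × Euc d → ℝ, ∫ p, F p ∂ω = ∑ i, ∑ j, F (x i, y j) * Q i j := by
    intro F
    rw [aux_integral x y ω hc F, ← aux_sum_mult x]
    refine Finset.sum_congr rfl fun i _ => ?_
    rw [← aux_sum_mult y, Finset.sum_div]
    refine Finset.sum_congr rfl fun j _ => ?_
    rw [hQ]; ring
  have hind : ∀ S : Set (Euc d × Euc d), MeasurableSet S →
      ω.real S = ∫ p, (if p ∈ S then (1 : ℝ) else 0) ∂ω := by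
    intro S hS
    rw [← integral_indicator_one hS]
    simp only [Set.indicator_apply, Pi.one_apply]
  refine ⟨Q, ⟨⟨?_, ?_, ?_⟩, ?_⟩, hF _⟩
  · intro i j
    exact div_nonneg (div_nonneg measureReal_nonneg (auxMult_pos y j).le) (auxMult_pos x i).le
  · intro i
    have h1 : ω.real (Prod.fst ⁻¹' {x i}) = auxMult x (x i) / n := by
      rw [← aux_emp_singleton, ← aux_emp, ← hc.2.1,
        map_measureReal_apply measurable_fst (measurableSet_singleton _)]
    rw [hind _ (measurable_fst (measurableSet_singleton _)), aux_integral x y ω hc] at h1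
    simp only [Set.mem_preimage, Set.mem_singleton_iff, ite_mul, one_mul, zero_mul] at h1
    rw [Finset.sum_comm] at h1
    simp only [Finset.sum_ite_eq', Finset.mem_image_of_mem x (Finset.mem_univ i), if_true] at h1
    rw [hQ, ← Finset.sum_div, aux_sum_mult y (fun b => ω.real {(x i, b)}), h1]
    have := auxMult_pos x i
    field_simp
  · intro j
    have h1 : ω.real (Prod.snd ⁻¹' {y j}) = auxMult y (y j) / n := by
      rw [← aux_emp_singleton, ← aux_emp, ← hc.2.2,
        map_measureReal_apply measurable_snd (measurableSet_singleton _)]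
    rw [hind _ (measurable_snd (measurableSet_singleton _)), aux_integral x y ω hc] at h1
    simp only [Set.mem_preimage, Set.mem_singleton_iff, ite_mul, one_mul, zero_mul] at h1
    simp only [Finset.sum_ite_eq', Finset.mem_image_of_mem y (Finset.mem_univ j), if_true] at h1
    rw [hQ, aux_sum_mult x (fun a => ω.real {(a, y j)} / auxMult y (y j)), ← Finset.sum_div, h1]
    have := auxMult_pos y j
    field_simp
  · intro s t
    have hm : Measurable (fun p : Euc d × Euc d => ((⟪θ, p.1⟫ : ℝ), (⟪θ, p.2⟫ : ℝ))) := by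
      fun_prop
    have h1 : ω.real ((fun p : Euc d × Euc d => ((⟪θ, p.1⟫ : ℝ), (⟪θ, p.2⟫ : ℝ))) ⁻¹' {(s, t)})
        = auxMult (fun k => ((⟪θ, x k⟫ : ℝ), (⟪θ, y k⟫ : ℝ))) (s, t) / n := by
      rw [← aux_emp_singleton, ← aux_piTheta hn x y θ hx hy, ← hω.2,
        map_measureReal_apply hm (measurableSet_singleton _)]
    rw [hind _ (hm (measurableSet_singleton _)), hF] at h1
    simp only [auxMult, Prod.mk.injEq] at h1
    rw [← h1, Finset.sum_filter]
    refine Finset.sum_congr rfl fun i _ => ?_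
    rw [Finset.sum_filter]
    by_cases hi : (⟪θ, x i⟫ : ℝ) = s
    · simp [hi]
    · simp [hi]

lemma aux_compact {d n : ℕ} (x y : Fin n → Euc d) (θ : Euc d) :
    IsCompact (Umat n ∩ PthetaSet θ x y) := by
  have hK : IsCompact (Set.univ.pi fun _ : Fin n => Set.univ.pi fun _ : Fin n =>
      Set.Icc (0 : ℝ) (1 / n)) :=
    isCompact_univ_pi fun _ => isCompact_univ_pi fun _ => isCompact_Icc
  have hcont : ∀ i j, Continuous fun P : Matrix (Fin n) (Fin n) ℝ => P i j :=
    fun i j => continuous_apply_apply i j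
  refine IsCompact.of_isClosed_subset hK ?_ ?_
  · refine IsClosed.inter ?_ ?_
    · refine IsClosed.and ?_ (IsClosed.and ?_ ?_)
      · simp only [Set.ofPred_forall]
        exact isClosed_iInter fun i => isClosed_iInter fun j =>
          isClosed_le continuous_const (hcont i j)
      · simp only [Set.ofPred_forall]
        exact isClosed_iInter fun i => isClosed_eq
          (continuous_finsetSum _ fun j _ => hcont i j) continuous_const
      · simp only [Set.ofPred_forall]
        exact isClosed_iInter fun j => isClosed_eq
          (continuous_finsetSum _ fun i _ => hcont i j) continuous_const
    · simp only [PthetaSet, Set.ofPred_forall]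
      exact isClosed_iInter fun s => isClosed_iInter fun t => isClosed_eq
          (continuous_finsetSum _ fun i _ => continuous_finsetSum _ fun j _ => hcont i j)
          continuous_const
  · rintro P ⟨⟨h0, h1, -⟩, -⟩ i - j -
    exact ⟨h0 i j, (Finset.single_le_sum (fun k _ => h0 i k) (Finset.mem_univ j)).trans (h1 i).le⟩

lemma aux_nonempty {d n : ℕ} (x y : Fin n → Euc d) (θ : Euc d) :
    (Umat n ∩ PthetaSet θ x y).Nonempty := by
  refine ⟨fun i j => if i = j then 1 / (n : ℝ) else 0, ⟨?_, ?_, ?_⟩, ?_⟩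
  · intro i j
    dsimp only
    split_ifs <;> positivity
  · intro i
    simp
  · intro j
    simp
  · intro s t
    simp only [Finset.sum_ite_eq, Finset.mem_filter, Finset.mem_univ, true_and]
    rw [← Finset.sum_filter, Finset.filter_filter, Finset.sum_const, nsmul_eq_mul]
    ring

/-- Kantorovich formulation of `CW_θ²` between point clouds with sorted
projections: it equals the minimum of the discrete transport cost over `U ∩ P_θ(X, Y)`,
and this minimum is attained. -/
theorem CWsq_discrete_kantorovich {d n : ℕ} (hn : 0 < n)
    (x y : Fin n → Euc d) (θ : Euc d) (hθ : ‖θ‖ = 1)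
    (hx : Monotone fun i => (⟪θ, x i⟫ : ℝ)) (hy : Monotone fun i => (⟪θ, y i⟫ : ℝ)) :
    ∃ P ∈ Umat n ∩ PthetaSet θ x y,
      CWsq θ (empMeasure x) (empMeasure y) = ∑ i, ∑ j, ‖x i - y j‖ ^ 2 * P i j ∧
      ∀ Q ∈ Umat n ∩ PthetaSet θ x y,
        ∑ i, ∑ j, ‖x i - y j‖ ^ 2 * P i j ≤ ∑ i, ∑ j, ‖x i - y j‖ ^ 2 * Q i j := by
  have hcont : Continuous fun P : Matrix (Fin n) (Fin n) ℝ =>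
      ∑ i, ∑ j, ‖x i - y j‖ ^ 2 * P i j :=
    continuous_finsetSum _ fun i _ => continuous_finsetSum _ fun j _ =>
      continuous_const.mul (continuous_apply_apply i j)
  obtain ⟨P, hP, hmin⟩ := (aux_compact x y θ).exists_isMinOn (aux_nonempty x y θ) hcont.continuousOn
  have hmin' : ∀ Q ∈ Umat n ∩ PthetaSet θ x y,
      ∑ i, ∑ j, ‖x i - y j‖ ^ 2 * P i j ≤ ∑ i, ∑ j, ‖x i - y j‖ ^ 2 * Q i j :=
    fun Q hQ => hmin hQ
  refine ⟨P, hP, ?_, hmin'⟩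
  refine IsLeast.csInf_eq ⟨?_, ?_⟩
  · obtain ⟨ω, hω, h⟩ := aux_forward hn x y θ hx hy P hP
    exact ⟨ω, hω, h⟩
  · rintro _ ⟨ω, hω, rfl⟩
    obtain ⟨Q, hQ, h⟩ := aux_backward hn x y θ hx hy ω hω
    rw [h]
    exact hmin' Q hQ

end
end

section
/- Let X = (x_1,…,x_n), Y = (y_1,…,y_n) ∈ (ℝ^d)^n and θ ∈ S^{d−1} satisfy P_θ x_1 ≤ … ≤ P_θ x_n and P_θ y_1 ≤ … ≤ P_θ y_n. Then the set of extreme points of the convex set U ∩ P_θ(X,Y) equals { P^{σ,τ} : (σ,τ) ∈ Perm_θ(X,Y) }, where P^{σ,τ} is the matrix with entries P^{σ,τ}_{ij} = (1/n)·1(σ(i) = τ(j)). -/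
open MeasureTheory Filter Topology ProbabilityTheory
open scoped ENNReal RealInnerProductSpace Classical

noncomputable section

/-- Extreme points of a convex set: points that cannot be written as the midpoint of two
distinct points of the set. -/
def ExtrPts {M : Type*} [AddCommMonoid M] [Module ℝ M] (C : Set M) : Set M :=
  {c | c ∈ C ∧ ∀ a ∈ C, ∀ b ∈ C, c = (1 / 2 : ℝ) • a + (1 / 2 : ℝ) • b → a = b}

/-- Pairs of permutations sorting the projections of `X` and `Y`. -/
def PermTheta {d n : ℕ} (θ : Euc d) (x y : Fin n → Euc d) :
    Set (Equiv.Perm (Fin n) × Equiv.Perm (Fin n)) :=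
  {p | Monotone (fun i => (⟪θ, x (p.1 i)⟫ : ℝ)) ∧ Monotone (fun i => (⟪θ, y (p.2 i)⟫ : ℝ))}

/-- The permutation matrix `P^{σ,τ}` with entries `(1/n)·1(σ(i) = τ(j))`. -/
def permMat (n : ℕ) (σ τ : Equiv.Perm (Fin n)) : Matrix (Fin n) (Fin n) ℝ :=
  fun i j => if σ i = τ j then 1 / n else 0

theorem aux_fix {n : ℕ} (u : Fin n → ℝ) (hu : Monotone u) (s : Equiv.Perm (Fin n))
    (h : Monotone fun i => u (s i)) (i : Fin n) : u (s i) = u i := by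
  have := Tuple.unique_monotone (f := u) (σ := s) (τ := 1) h hu
  exact congrFun this i

theorem aux_mem {d n : ℕ} (x y : Fin n → Euc d) (θ : Euc d)
    (hx : Monotone fun i => (⟪θ, x i⟫ : ℝ)) (hy : Monotone fun i => (⟪θ, y i⟫ : ℝ))
    (p : Equiv.Perm (Fin n) × Equiv.Perm (Fin n)) (hp : p ∈ PermTheta θ x y) :
    permMat n p.1 p.2 ∈ Umat n ∩ PthetaSet θ x y := by
  obtain ⟨σ, τ⟩ := p
  obtain ⟨h1, h2⟩ := hp
  have e1 := aux_fix _ hx σ h1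
  have e2 := aux_fix _ hy τ h2
  refine ⟨⟨?_, ?_, ?_⟩, ?_⟩
  · intro i j
    simp only [permMat]
    split_ifs <;> positivity
  · intro i
    simp only [permMat]
    rw [Equiv.sum_comp τ (fun l => if σ i = l then (1 / n : ℝ) else 0)]
    simp
  · intro j
    simp only [permMat]
    rw [Equiv.sum_comp σ (fun l => if l = τ j then (1 / n : ℝ) else 0)]
    simp
  · intro s t
    simp only [permMat, Finset.sum_filter]
    have : ∀ i, (if (⟪θ, x i⟫ : ℝ) = s then
        ∑ j, (if (⟪θ, y j⟫ : ℝ) = t then (if σ i = τ j then (1 / n : ℝ) else 0) else 0) else 0)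
        = (fun k => if (⟪θ, x k⟫ : ℝ) = s ∧ (⟪θ, y k⟫ : ℝ) = t then (1 / n : ℝ) else 0) (σ i) := by
      intro i
      have e3 : ∑ j, (if (⟪θ, y j⟫ : ℝ) = t then (if σ i = τ j then (1 / n : ℝ) else 0) else 0)
          = if (⟪θ, y (σ i)⟫ : ℝ) = t then (1 / n : ℝ) else 0 := by
        rw [← Equiv.sum_comp τ.symm, Finset.sum_eq_single (σ i)]
        · have := e2 (τ.symm (σ i))
          simp only [Equiv.apply_symm_apply] at this
          simp [this]
        · intro b _ hb
          simp [Ne.symm hb]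
        · simp
      have e1i := e1 i
      simp only [e3, e1i]
      split_ifs <;> simp_all
    rw [Finset.sum_congr rfl (fun i _ => this i), Equiv.sum_comp σ
      (fun k => if (⟪θ, x k⟫ : ℝ) = s ∧ (⟪θ, y k⟫ : ℝ) = t then (1 / n : ℝ) else 0),
      ← Finset.sum_filter]
    simp [div_eq_mul_inv]

theorem aux_perm {n : ℕ} (u v : Fin n → ℝ) (hu : Monotone u) (hv : Monotone v)
    (π : Equiv.Perm (Fin n)) (h : ∀ i, ∃ k, u k = u i ∧ v k = v (π i)) :
    ∃ σ τ : Equiv.Perm (Fin n), Monotone (fun i => u (σ i)) ∧ Monotone (fun i => v (τ i)) ∧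
      ∀ i j, σ i = τ j ↔ π i = j := by
  have chain : ∀ i j, (u i ≤ u j ∧ v (π i) ≤ v (π j)) ∨ (u j ≤ u i ∧ v (π j) ≤ v (π i)) := by
    intro i j
    obtain ⟨k, hk1, hk2⟩ := h i
    obtain ⟨l, hl1, hl2⟩ := h j
    rw [← hk1, ← hk2, ← hl1, ← hl2]
    rcases le_total k l with hkl | hkl
    · exact Or.inl ⟨hu hkl, hv hkl⟩
    · exact Or.inr ⟨hu hkl, hv hkl⟩
  let f : Fin n → ℝ := fun i => u i + v (π i)
  let s := Tuple.sort f
  have hs : Monotone (f ∘ s) := Tuple.monotone_sort f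
  have hus : Monotone fun i => u (s i) := by
    intro i j hij
    have := hs hij
    simp only [f, Function.comp] at this ⊢
    rcases chain (s i) (s j) with c | c <;> linarith [c.1, c.2]
  have hvs : Monotone fun i => v ((π * s) i) := by
    intro i j hij
    have := hs hij
    simp only [f, Function.comp, Equiv.Perm.mul_apply] at this ⊢
    rcases chain (s i) (s j) with c | c <;> linarith [c.1, c.2]
  have fu := aux_fix u hu s hus
  have fv := aux_fix v hv (π * s) hvs
  refine ⟨s⁻¹, (π * s)⁻¹, ?_, ?_, ?_⟩
  · have : (fun i => u (s⁻¹ i)) = u := by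
      funext i
      rw [← fu (s⁻¹ i)]; simp
    rw [this]; exact hu
  · have : (fun i => v ((π * s)⁻¹ i)) = v := by
      funext i
      rw [← fv ((π * s)⁻¹ i), ← Equiv.Perm.mul_apply, mul_inv_cancel, Equiv.Perm.one_apply]
    rw [this]; exact hv
  · intro i j
    rw [mul_inv_rev, Equiv.Perm.mul_apply, (s⁻¹).injective.eq_iff, Equiv.Perm.eq_inv_iff_eq]

theorem aux_birkhoff {n : ℕ} (hn : n ≠ 0) (P : Matrix (Fin n) (Fin n) ℝ) (hP : P ∈ Umat n) :
    ∃ (w : ℝ) (π : Equiv.Perm (Fin n)), 0 < w ∧ w ≤ 1 ∧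
      ∀ i j, w * (if π i = j then (1 / n : ℝ) else 0) ≤ P i j := by
  have hn' : (0 : ℝ) < n := by positivity
  obtain ⟨h0, h1, h2⟩ := hP
  have hM : (n : ℝ) • P ∈ doublyStochastic ℝ (Fin n) := by
    rw [mem_doublyStochastic_iff_sum]
    refine ⟨fun i j => ?_, fun i => ?_, fun j => ?_⟩
    · simpa using mul_nonneg hn'.le (h0 i j)
    · simp only [Matrix.smul_apply, smul_eq_mul, ← Finset.mul_sum, h1]; field_simp
    · simp only [Matrix.smul_apply, smul_eq_mul, ← Finset.mul_sum, h2]; field_simp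
  obtain ⟨w, w0, w1, hw⟩ := exists_eq_sum_perm_of_mem_doublyStochastic hM
  obtain ⟨π, hπ⟩ : ∃ π, 0 < w π := by
    by_contra! hc
    have := Finset.sum_nonpos (s := Finset.univ) (fun i _ => hc i)
    linarith
  refine ⟨w π, π, hπ, ?_, ?_⟩
  · rw [← w1]
    exact Finset.single_le_sum (fun i _ => w0 i) (Finset.mem_univ π)
  · intro i j
    have e := congrFun (congrFun hw i) j
    rw [Matrix.sum_apply] at e
    have l := Finset.single_le_sum (s := Finset.univ)
      (f := fun c => (w c • c.permMatrix ℝ : Matrix (Fin n) (Fin n) ℝ) i j) (fun c _ => by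
        simp only [Matrix.smul_apply, smul_eq_mul, Equiv.Perm.permMatrix, PEquiv.toMatrix_apply]
        have := w0 c
        split_ifs <;> simp [this]) (Finset.mem_univ π)
    rw [e] at l
    simp only [Matrix.smul_apply, smul_eq_mul, Equiv.Perm.permMatrix, PEquiv.toMatrix_apply,
      Equiv.toPEquiv_apply, Option.mem_def, Option.some.injEq] at l
    have : (if π i = j then (1 / n : ℝ) else 0) = (if π i = j then (1 : ℝ) else 0) / n := by
      split_ifs <;> simp
    rw [this, ← mul_div_assoc, div_le_iff₀ hn']
    linarith

theorem aux_comb {d n : ℕ} (x y : Fin n → Euc d) (θ : Euc d) (P Q : Matrix (Fin n) (Fin n) ℝ)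
    (hP : P ∈ Umat n ∩ PthetaSet θ x y) (hQ : Q ∈ Umat n ∩ PthetaSet θ x y) (c : ℝ)
    (h : ∀ i j, 0 ≤ (1 - c) * P i j + c * Q i j) :
    (1 - c) • P + c • Q ∈ Umat n ∩ PthetaSet θ x y := by
  obtain ⟨⟨p0, p1, p2⟩, p3⟩ := hP
  obtain ⟨⟨q0, q1, q2⟩, q3⟩ := hQ
  refine ⟨⟨?_, ?_, ?_⟩, ?_⟩
  · intro i j; simpa using h i j
  · intro i
    simp only [Matrix.add_apply, Matrix.smul_apply, smul_eq_mul, Finset.sum_add_distrib,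
      ← Finset.mul_sum, p1, q1]
    ring
  · intro i
    simp only [Matrix.add_apply, Matrix.smul_apply, smul_eq_mul, Finset.sum_add_distrib,
      ← Finset.mul_sum, p2, q2]
    ring
  · intro s t
    simp only [Matrix.add_apply, Matrix.smul_apply, smul_eq_mul, Finset.sum_add_distrib,
      ← Finset.mul_sum, p3 s t, q3 s t]
    ring

/-- constrained Birkhoff–von Neumann theorem: the extreme points of
`U ∩ P_θ(X, Y)` are exactly the permutation matrices `P^{σ,τ}` for
`(σ, τ) ∈ Perm_θ(X, Y)`. -/
theorem extreme_points_U_cap_Ptheta {d n : ℕ}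
    (x y : Fin n → Euc d) (θ : Euc d) (hθ : ‖θ‖ = 1)
    (hx : Monotone fun i => (⟪θ, x i⟫ : ℝ)) (hy : Monotone fun i => (⟪θ, y i⟫ : ℝ)) :
    ExtrPts (Umat n ∩ PthetaSet θ x y)
      = {P | ∃ p ∈ PermTheta θ x y, P = permMat n p.1 p.2} := by
  apply Set.Subset.antisymm
  · rintro P ⟨hP, hext⟩
    by_cases hn : n = 0
    · subst hn
      exact ⟨(1, 1), ⟨hx, hy⟩, Subsingleton.elim _ _⟩
    have hn' : (0 : ℝ) < n := by positivity
    obtain ⟨w, π, w0, w1, hw⟩ := aux_birkhoff hn P hP.1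
    have hsupp : ∀ i, ∃ k, (⟪θ, x k⟫ : ℝ) = ⟪θ, x i⟫ ∧ (⟪θ, y k⟫ : ℝ) = ⟪θ, y (π i)⟫ := by
      intro i
      by_contra! hc
      have hb := hP.2 ⟪θ, x i⟫ ⟪θ, y (π i)⟫
      have hem : (Finset.univ.filter (fun k => (⟪θ, x k⟫ : ℝ) = ⟪θ, x i⟫ ∧
          (⟪θ, y k⟫ : ℝ) = ⟪θ, y (π i)⟫)) = ∅ :=
        Finset.filter_eq_empty_iff.mpr (fun k _ hk => hc k hk.1 hk.2)
      rw [hem] at hb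
      simp only [Finset.card_empty, Nat.cast_zero, zero_div] at hb
      rw [Finset.sum_eq_zero_iff_of_nonneg
        (fun i _ => Finset.sum_nonneg (fun j _ => hP.1.1 i j))] at hb
      have hb1 := hb i (by simp)
      rw [Finset.sum_eq_zero_iff_of_nonneg (fun j _ => hP.1.1 i j)] at hb1
      have hb2 := hb1 (π i) (by simp)
      have := hw i (π i)
      rw [hb2, if_pos rfl] at this
      have : 0 < w * (1 / n) := by positivity
      linarith
    obtain ⟨σ, τ, hσ, hτ, hst⟩ := aux_perm _ _ hx hy π hsupp
    have hmem : (σ, τ) ∈ PermTheta θ x y := ⟨hσ, hτ⟩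
    refine ⟨(σ, τ), hmem, ?_⟩
    have hQ := aux_mem x y θ hx hy _ hmem
    have hle : ∀ i j, w * permMat n σ τ i j ≤ P i j := by
      intro i j
      simpa only [permMat, hst] using hw i j
    have ha := aux_comb x y θ P _ hP hQ w (fun i j => by
      have h1 := hP.1.1 i j
      have h2 := hQ.1.1 i j
      have : 0 ≤ 1 - w := by linarith
      positivity)
    have hb := aux_comb x y θ P _ hP hQ (-w) (fun i j => by
      have h1 := hP.1.1 i j
      have h2 := hle i j
      have := mul_nonneg w0.le h1
      simp only
      linarith)
    have heq := hext _ ha _ hb (by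
      ext i j
      simp only [Matrix.add_apply, Matrix.smul_apply, smul_eq_mul]
      ring)
    ext i j
    have e := congrFun (congrFun heq i) j
    simp only [Matrix.add_apply, Matrix.smul_apply, smul_eq_mul] at e
    have : w * (P i j - permMat n σ τ i j) = 0 := by linarith
    rcases mul_eq_zero.mp this with h | h
    · exact absurd h w0.ne'
    · simp only
      linarith
  · rintro P ⟨p, hp, rfl⟩
    refine ⟨aux_mem x y θ hx hy p hp, ?_⟩
    intro a ha b hb hab
    ext i j
    have e := congrFun (congrFun hab i) j
    simp only [Matrix.add_apply, Matrix.smul_apply, smul_eq_mul, permMat] at e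
    have a0 := ha.1.1 i j
    have b0 := hb.1.1 i j
    have a1 : a i j ≤ 1 / n := by
      rw [← ha.1.2.1 i]
      exact Finset.single_le_sum (f := fun j => a i j) (fun j _ => ha.1.1 i j) (Finset.mem_univ j)
    have b1 : b i j ≤ 1 / n := by
      rw [← hb.1.2.1 i]
      exact Finset.single_le_sum (f := fun j => b i j) (fun j _ => hb.1.1 i j) (Finset.mem_univ j)
    split_ifs at e <;> linarith

end
end

section
/- For any μ1, μ2 ∈ P_2(ℝ^d), the infimum defining the Min-Pivot Sliced discrepancy minPS²(μ1, μ2) := inf_{θ ∈ S^{d−1}} PS_θ²(μ1, μ2) is attained at some θ* ∈ S^{d−1}. -/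
open MeasureTheory Filter Topology ProbabilityTheory
open scoped ENNReal RealInnerProductSpace Classical

noncomputable section

lemma le_quantile_iff (ν : Measure ℝ) [IsProbabilityMeasure ν] {t : ℝ} (ht : t ∈ Set.Ioo (0:ℝ) 1)
    (s : ℝ) : quantile ν t ≤ s ↔ t ≤ ν.real (Set.Iic s) := by
  have hset : {s : ℝ | ENNReal.ofReal t ≤ ν (Set.Iic s)} = {s : ℝ | t ≤ cdf ν s} := by
    ext s
    simp only [Set.mem_ofPred_eq]
    rw [← ofReal_cdf, ENNReal.ofReal_le_ofReal_iff (cdf_nonneg _ _)]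
  have hne : {s : ℝ | t ≤ cdf ν s}.Nonempty := by
    have := (tendsto_cdf_atTop ν).eventually (eventually_gt_nhds ht.2)
    obtain ⟨s, hs⟩ := this.exists
    exact ⟨s, hs.le⟩
  have hbd : BddBelow {s : ℝ | t ≤ cdf ν s} := by
    have := (tendsto_cdf_atBot ν).eventually (eventually_lt_nhds ht.1)
    obtain ⟨s, hs⟩ := this.exists
    refine ⟨s, fun u hu => ?_⟩
    by_contra hlt
    have h1 := monotone_cdf ν (not_le.1 hlt).le
    have h2 : t ≤ cdf ν u := hu
    linarith
  unfold quantile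
  rw [hset, ← cdf_eq_real]
  constructor
  · intro h
    have hc : ContinuousWithinAt (cdf ν) (Set.Ioi s) s :=
      ((cdf ν).right_continuous s).mono Set.Ioi_subset_Ici_self
    refine ge_of_tendsto hc ?_
    filter_upwards [self_mem_nhdsWithin] with u hu
    obtain ⟨v, hv, hvu⟩ := exists_lt_of_csInf_lt hne (lt_of_le_of_lt h hu)
    exact le_trans hv (monotone_cdf ν hvu.le)
  · intro h
    exact csInf_le hbd h

lemma quantile_monotoneOn (ν : Measure ℝ) [IsProbabilityMeasure ν] :
    MonotoneOn (quantile ν) (Set.Ioo (0:ℝ) 1) := by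
  intro a ha b hb hab
  rw [le_quantile_iff ν ha]
  exact hab.trans ((le_quantile_iff ν hb _).1 le_rfl)

lemma restr_eq : (volume.restrict (Set.Icc (0:ℝ) 1)) = volume.restrict (Set.Ioo (0:ℝ) 1) :=
  (Measure.restrict_congr_set Ioo_ae_eq_Icc).symm

instance instProbL : IsProbabilityMeasure (volume.restrict (Set.Icc (0:ℝ) 1)) :=
  ⟨by simp⟩

lemma quantile_aem (ν : Measure ℝ) [IsProbabilityMeasure ν] :
    AEMeasurable (quantile ν) (volume.restrict (Set.Icc (0:ℝ) 1)) := by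
  rw [restr_eq]
  exact aemeasurable_restrict_of_monotoneOn measurableSet_Ioo (quantile_monotoneOn ν)

lemma map_quantile (ν : Measure ℝ) [IsProbabilityMeasure ν] :
    (volume.restrict (Set.Icc (0:ℝ) 1)).map (quantile ν) = ν := by
  have : IsProbabilityMeasure ((volume.restrict (Set.Icc (0:ℝ) 1)).map (quantile ν)) :=
    Measure.isProbabilityMeasure_map (quantile_aem ν)
  refine Measure.ext_of_Iic _ _ fun s => ?_
  rw [Measure.map_apply_of_aemeasurable (quantile_aem ν) measurableSet_Iic]
  have h1 : (quantile ν ⁻¹' Set.Iic s) =ᵐ[volume.restrict (Set.Icc (0:ℝ) 1)]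
      (Set.Iic (ν.real (Set.Iic s)) : Set ℝ) := by
    rw [restr_eq]
    filter_upwards [ae_restrict_mem measurableSet_Ioo] with t ht
    exact propext (le_quantile_iff ν ht s)
  rw [measure_congr h1, Measure.restrict_apply measurableSet_Iic]
  have h2 : Set.Iic (ν.real (Set.Iic s)) ∩ Set.Icc 0 1 = Set.Icc 0 (ν.real (Set.Iic s)) := by
    ext x
    have : ν.real (Set.Iic s) ≤ 1 := measureReal_le_one
    simp only [Set.mem_inter_iff, Set.mem_Iic, Set.mem_Icc]
    constructor
    · rintro ⟨a, b, c⟩; exact ⟨b, a⟩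
    · rintro ⟨a, b⟩; exact ⟨b, a, b.trans this⟩
  rw [h2]
  simp

lemma quantile_memLp (ν : Measure ℝ) [IsProbabilityMeasure ν] (h : MemLp id 2 ν) :
    MemLp (quantile ν) 2 (volume.restrict (Set.Icc (0:ℝ) 1)) := by
  have h' : MemLp id 2 ((volume.restrict (Set.Icc (0:ℝ) 1)).map (quantile ν)) := by
    rwa [map_quantile]
  exact (memLp_map_measure_iff aestronglyMeasurable_id (quantile_aem ν)).1 h'

lemma quantile_le_of_le {Ω : Type*} [MeasurableSpace Ω] (μ : Measure Ω) [IsProbabilityMeasure μ]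
    {X Y : Ω → ℝ} (hX : Measurable X) (hY : Measurable Y) (hXY : ∀ x, X x ≤ Y x)
    {t : ℝ} (ht : t ∈ Set.Ioo (0:ℝ) 1) : quantile (μ.map X) t ≤ quantile (μ.map Y) t := by
  have := Measure.isProbabilityMeasure_map (μ := μ) hX.aemeasurable
  have := Measure.isProbabilityMeasure_map (μ := μ) hY.aemeasurable
  rw [le_quantile_iff _ ht]
  refine ((le_quantile_iff (μ.map Y) ht _).1 le_rfl).trans ?_
  rw [map_measureReal_apply hX measurableSet_Iic, map_measureReal_apply hY measurableSet_Iic]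
  exact measureReal_mono (fun x hx => (hXY x).trans hx)

lemma exists_bound {d : ℕ} (μ : Measure (Euc d)) (h : μ ∈ (P2 : Set (Measure (Euc d)))) :
    ∃ H : ℝ → ℝ, MemLp H 2 (volume.restrict (Set.Icc (0:ℝ) 1)) ∧
      ∀ θ : Euc d, ‖θ‖ = 1 → ∀ t ∈ Set.Ioo (0:ℝ) 1, |quantile (projLine θ μ) t| ≤ H t := by
  obtain ⟨hp, hi⟩ := h
  have hn : MemLp (fun x : Euc d => ‖x‖) 2 μ :=
    (memLp_two_iff_integrable_sq measurable_norm.aestronglyMeasurable).2 hi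
  have m1 : Measurable (fun x : Euc d => ‖x‖) := measurable_norm
  have m2 : Measurable (fun x : Euc d => -‖x‖) := measurable_norm.neg
  have p1 := Measure.isProbabilityMeasure_map (μ := μ) m1.aemeasurable
  have p2 := Measure.isProbabilityMeasure_map (μ := μ) m2.aemeasurable
  refine ⟨fun t => |quantile (μ.map (fun x => ‖x‖)) t| + |quantile (μ.map (fun x => -‖x‖)) t|,
    ?_, ?_⟩
  · refine (quantile_memLp _ ?_).abs.add (quantile_memLp _ ?_).abs
    · exact (memLp_map_measure_iff aestronglyMeasurable_id m1.aemeasurable).2 hn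
    · exact (memLp_map_measure_iff aestronglyMeasurable_id m2.aemeasurable).2 hn.neg
  · intro θ hθ t ht
    have m3 : Measurable (fun x : Euc d => ⟪θ, x⟫) := by fun_prop
    have b : ∀ x : Euc d, |⟪θ, x⟫| ≤ ‖x‖ := fun x => by
      simpa [hθ] using abs_real_inner_le_norm θ x
    have u := quantile_le_of_le μ m3 m1 (fun x => (abs_le.1 (b x)).2) ht
    have l := quantile_le_of_le μ m2 m3 (fun x => (abs_le.1 (b x)).1) ht
    unfold projLine
    rw [abs_le]
    constructor
    · have := neg_abs_le (quantile (μ.map (fun x => -‖x‖)) t)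
      have := abs_nonneg (quantile (μ.map (fun x => ‖x‖)) t)
      linarith
    · have := le_abs_self (quantile (μ.map (fun x => ‖x‖)) t)
      have := abs_nonneg (quantile (μ.map (fun x => -‖x‖)) t)
      linarith

lemma tendsto_quantile_ae {d : ℕ} (μ : Measure (Euc d)) [IsProbabilityMeasure μ]
    (θs : ℕ → Euc d) (θ : Euc d) (hθ : Tendsto θs atTop (𝓝 θ)) :
    ∀ᵐ t ∂(volume.restrict (Set.Icc (0:ℝ) 1)),
      Tendsto (fun n => quantile (projLine (θs n) μ) t) atTop (𝓝 (quantile (projLine θ μ) t)) := by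
  have mm : ∀ θ : Euc d, Measurable (fun x : Euc d => ⟪θ, x⟫) := fun θ => by fun_prop
  have pp : ∀ θ : Euc d, IsProbabilityMeasure (projLine θ μ) := fun θ =>
    Measure.isProbabilityMeasure_map (μ := μ) (mm θ).aemeasurable
  have hF : ∀ (θ : Euc d) s, (projLine θ μ).real (Set.Iic s) = μ.real {x | ⟪θ, x⟫ ≤ s} :=
    fun θ s => map_measureReal_apply (mm θ) measurableSet_Iic
  have hmeas : TendstoInMeasure μ (fun n x => ⟪θs n, x⟫) atTop (fun x => ⟪θ, x⟫) := by
    refine tendstoInMeasure_of_tendsto_ae (fun n => (mm _).aestronglyMeasurable) ?_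
    refine Eventually.of_forall fun x => ?_
    exact hθ.inner tendsto_const_nhds
  have hdev : ∀ ε : ℝ, 0 < ε →
      Tendsto (fun n => μ.real {x | ε ≤ |⟪θs n, x⟫ - ⟪θ, x⟫|}) atTop (𝓝 0) := by
    intro ε hε
    have := tendstoInMeasure_iff_norm.1 hmeas ε hε
    exact (ENNReal.tendsto_toReal ENNReal.zero_ne_top).comp this
  rw [restr_eq]
  have hcount := (quantile_monotoneOn (projLine θ μ)).countable_not_continuousWithinAt
  filter_upwards [ae_restrict_mem measurableSet_Ioo,
    (ae_restrict_of_ae (hcount.ae_notMem volume) : ∀ᵐ t ∂(volume.restrict (Set.Ioo (0:ℝ) 1)),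
      t ∉ {x | x ∈ Set.Ioo (0:ℝ) 1 ∧ ¬ContinuousWithinAt (quantile (projLine θ μ)) (Set.Ioo 0 1) x})]
    with t ht htc
  have hc : ContinuousWithinAt (quantile (projLine θ μ)) (Set.Ioo 0 1) t := by
    by_contra hcon
    exact htc ⟨ht, hcon⟩
  have hc : ContinuousAt (quantile (projLine θ μ)) t :=
    hc.continuousAt (Ioo_mem_nhds ht.1 ht.2)
  rw [tendsto_order]
  constructor
  · intro s hs
    obtain ⟨a, hsa, haq⟩ := exists_between hs
    obtain ⟨b, hab, hbq⟩ := exists_between haq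
    have hb : μ.real {x | ⟪θ, x⟫ ≤ b} < t := by
      rw [← hF]
      by_contra hcon
      exact absurd ((le_quantile_iff (projLine θ μ) ht b).2 (not_lt.1 hcon)) (not_le.2 hbq)
    have he := (hdev (b - a) (by linarith)).eventually
      (eventually_lt_nhds (sub_pos.2 hb))
    filter_upwards [he] with n hn
    refine lt_of_lt_of_le hsa ?_
    by_contra hcon
    have h1 := (le_quantile_iff (projLine (θs n) μ) ht a).1 (not_le.1 hcon).le
    rw [hF] at h1
    have h2 : μ.real {x | ⟪θs n, x⟫ ≤ a} ≤ μ.real ({x | ⟪θ, x⟫ ≤ b} ∪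
        {x | (b - a) ≤ |⟪θs n, x⟫ - ⟪θ, x⟫|}) := by
      refine measureReal_mono fun x hx => ?_
      simp only [Set.mem_union, Set.mem_ofPred_eq] at hx ⊢
      by_cases hxb : ⟪θ, x⟫ ≤ b
      · exact Or.inl hxb
      · right
        rw [abs_sub_comm]
        exact le_trans (by linarith [not_le.1 hxb]) (le_abs_self _)
    have h3 := measureReal_union_le (μ := μ) {x | ⟪θ, x⟫ ≤ b}
        {x | (b - a) ≤ |⟪θs n, x⟫ - ⟪θ, x⟫|}
    linarith
  · intro s hs
    have e1 := hc.eventually (eventually_lt_nhds hs)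
    have e2 : ∀ᶠ t' in 𝓝 t, t' < 1 := eventually_lt_nhds ht.2
    obtain ⟨t', ⟨h1, h2⟩, h3⟩ := (((e1.and e2).filter_mono nhdsWithin_le_nhds).and
      (self_mem_nhdsWithin : Set.Ioi t ∈ 𝓝[>] t)).exists
    have h3 : t < t' := h3
    have ht' : t' ∈ Set.Ioo (0:ℝ) 1 := ⟨ht.1.trans h3, h2⟩
    obtain ⟨a, hqa, has⟩ := exists_between h1
    obtain ⟨b, hab, hbs⟩ := exists_between has
    have ha := (le_quantile_iff (projLine θ μ) ht' a).1 hqa.le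
    rw [hF] at ha
    have he := (hdev (b - a) (by linarith)).eventually
      (eventually_lt_nhds (sub_pos.2 h3))
    filter_upwards [he] with n hn
    refine lt_of_le_of_lt ?_ hbs
    rw [le_quantile_iff _ ht, hF]
    have h2 : μ.real {x | ⟪θ, x⟫ ≤ a} ≤ μ.real ({x | ⟪θs n, x⟫ ≤ b} ∪
        {x | (b - a) ≤ |⟪θs n, x⟫ - ⟪θ, x⟫|}) := by
      refine measureReal_mono fun x hx => ?_
      simp only [Set.mem_union, Set.mem_ofPred_eq] at hx ⊢
      by_cases hxb : ⟪θs n, x⟫ ≤ b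
      · exact Or.inl hxb
      · right
        exact le_trans (by linarith [not_le.1 hxb]) (le_abs_self _)
    have h3 := measureReal_union_le (μ := μ) {x | ⟪θs n, x⟫ ≤ b}
        {x | (b - a) ≤ |⟪θs n, x⟫ - ⟪θ, x⟫|}
    linarith

/-- bundling a probability measure -/
def mkP {X : Type*} [MeasurableSpace X] (μ : Measure X) (h : IsProbabilityMeasure μ) :
    ProbabilityMeasure X := ⟨μ, h⟩

lemma lsc_integral {X : Type*} [MeasurableSpace X] [TopologicalSpace X] [BorelSpace X]
    [HasOuterApproxClosed X] (ρs : ℕ → ProbabilityMeasure X) (ρ : ProbabilityMeasure X)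
    (h : Tendsto ρs atTop (𝓝 ρ)) (f : X → ℝ) (hf : Continuous f) (hf0 : 0 ≤ f)
    (hi : ∀ n, Integrable f (ρs n : Measure X)) (b : ℕ → ℝ) (B : ℝ)
    (hb : ∀ n, ∫ x, f x ∂(ρs n : Measure X) ≤ b n) (hB : Tendsto b atTop (𝓝 B)) :
    ∫ x, f x ∂(ρ : Measure X) ≤ B := by
  have h1 := lintegral_le_liminf_lintegral_of_forall_isOpen_measure_le_liminf_measure
    (μ := (ρ : Measure X)) (μs := fun n => (ρs n : Measure X)) hf hf0
    (fun G hG => ProbabilityMeasure.le_liminf_measure_open_of_tendsto h hG)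
  have h2 : ∀ n, ∫⁻ x, ENNReal.ofReal (f x) ∂(ρs n : Measure X) ≤ ENNReal.ofReal (b n) := by
    intro n
    rw [← ofReal_integral_eq_lintegral_ofReal (hi n) (Eventually.of_forall hf0)]
    exact ENNReal.ofReal_le_ofReal (hb n)
  have h3 : ∫⁻ x, ENNReal.ofReal (f x) ∂(ρ : Measure X) ≤ ENNReal.ofReal B := by
    refine h1.trans ((liminf_le_liminf (Eventually.of_forall h2)).trans ?_)
    exact ((ENNReal.continuous_ofReal.tendsto B).comp hB).liminf_eq.le
  have hB0 : 0 ≤ B := ge_of_tendsto hB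
    (Eventually.of_forall fun n => (integral_nonneg hf0).trans (hb n))
  rw [integral_eq_lintegral_of_nonneg_ae (Eventually.of_forall hf0)
    hf.measurable.aestronglyMeasurable]
  exact ENNReal.toReal_le_of_le_ofReal hB0 h3

lemma integrable_sq_sub {d : ℕ} {Ω : Type*} [MeasurableSpace Ω] (M : Measure Ω)
    (f g : Ω → Euc d) (hf : AEStronglyMeasurable f M) (hg : AEStronglyMeasurable g M)
    (hfi : Integrable (fun x => ‖f x‖ ^ 2) M) (hgi : Integrable (fun x => ‖g x‖ ^ 2) M) :
    Integrable (fun x => ‖f x - g x‖ ^ 2) M := by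
  refine ((hfi.const_mul 2).add (hgi.const_mul 2)).mono' ((hf.sub hg).norm.pow 2) ?_
  refine Eventually.of_forall fun x => ?_
  have h1 := norm_sub_le (f x) (g x)
  have h2 : ‖f x - g x‖ ^ 2 ≤ (‖f x‖ + ‖g x‖) ^ 2 := by gcongr
  simp only [Real.norm_eq_abs, abs_of_nonneg (sq_nonneg ‖f x - g x‖), Pi.add_apply]
  nlinarith [sq_nonneg (‖f x‖ - ‖g x‖)]

/-- pull back of an integrable square under a marginal -/
lemma integrable_of_map {d : ℕ} {Ω : Type*} [MeasurableSpace Ω] (M : Measure Ω)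
    (f : Ω → Euc d) (hf : Measurable f) (ν : Measure (Euc d)) (h : M.map f = ν)
    (hi : Integrable (fun x => ‖x‖ ^ 2) ν) : Integrable (fun x => ‖f x‖ ^ 2) M := by
  subst h
  exact (integrable_map_measure (by fun_prop) hf.aemeasurable).1 hi

lemma recovery {d : ℕ} {Ω : Type*} [MeasurableSpace Ω] (L : Measure Ω) [IsProbabilityMeasure L]
    (Gs : ℕ → Ω → Euc d) (G : Ω → Euc d) (hGs : ∀ n, Measurable (Gs n)) (hG : Measurable G)
    (H : Ω → ℝ) (hH : Integrable H L)
    (hb : ∀ n, ∀ᵐ t ∂L, ‖Gs n t‖ ^ 2 ≤ H t)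
    (hlim : ∀ᵐ t ∂L, Tendsto (fun n => Gs n t) atTop (𝓝 (G t)))
    (μ : Measure (Euc d)) (hμ : μ ∈ (P2 : Set (Measure (Euc d))))
    (π : Measure (Euc d × Euc d)) (hπ : π ∈ Coupling (L.map G) μ) :
    ∃ πs : ℕ → Measure (Euc d × Euc d), (∀ n, πs n ∈ Coupling (L.map (Gs n)) μ) ∧
      Tendsto (fun n => tCost (πs n)) atTop (𝓝 (tCost π)) := by
  obtain ⟨hπp, hπ1, hπ2⟩ := hπ
  set M : Measure (Ω × Euc d) := L ⊗ₘ (π.condKernel.comap G hG) with hM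
  have hMG : M.map (fun p => (G p.1, p.2)) = π := by
    have hd : (L.map G) ⊗ₘ π.condKernel = π := by
      rw [← hπ1]
      exact π.disintegrate π.condKernel
    have : IsProbabilityMeasure (L.map G) := Measure.isProbabilityMeasure_map hG.aemeasurable
    rw [← hd]
    refine Measure.ext_of_lintegral _ fun f hf => ?_
    rw [lintegral_map hf (by fun_prop), hM, Measure.lintegral_compProd (by fun_prop),
      Measure.lintegral_compProd hf, lintegral_map (by fun_prop) hG]
    rfl
  have hM1 : M.map Prod.fst = L := Measure.fst_compProd _ _
  have hM2 : M.map Prod.snd = μ := by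
    rw [← hπ2, ← hMG, Measure.map_map (by fun_prop) (by fun_prop)]
    rfl
  have hMp : IsProbabilityMeasure M := by rw [hM]; infer_instance
  refine ⟨fun n => M.map (fun p => (Gs n p.1, p.2)), fun n => ⟨?_, ?_, ?_⟩, ?_⟩
  · exact Measure.isProbabilityMeasure_map (by fun_prop)
  · rw [Measure.map_map (by fun_prop) (by fun_prop), ← hM1,
      Measure.map_map (by fun_prop) (by fun_prop)]
    rfl
  · rw [Measure.map_map (by fun_prop) (by fun_prop), ← hM2]
    rfl
  · have hc : ∀ g : Ω → Euc d, Measurable g →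
        tCost (M.map (fun p => (g p.1, p.2))) = ∫ p, ‖g p.1 - p.2‖ ^ 2 ∂M := by
      intro g hg
      unfold tCost
      rw [integral_map (by fun_prop) (by fun_prop)]
    have e : tCost π = ∫ p, ‖G p.1 - p.2‖ ^ 2 ∂M := by rw [← hc G hG, hMG]
    rw [e]
    simp_rw [fun n => hc (Gs n) (hGs n)]
    have q : Measure.QuasiMeasurePreserving Prod.fst M L := ⟨measurable_fst, by rw [hM1]⟩
    have i1 : Integrable (fun p : Ω × Euc d => H p.1) M := by
      have : Integrable H (M.map Prod.fst) := by rwa [hM1]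
      exact this.comp_measurable measurable_fst
    have i2 := integrable_of_map M Prod.snd measurable_snd μ hM2 hμ.2
    refine tendsto_integral_of_dominated_convergence
      (fun p => 2 * H p.1 + 2 * ‖p.2‖ ^ 2) (fun n => ?_) ((i1.const_mul 2).add (i2.const_mul 2))
      (fun n => ?_) ?_
    · have := hGs n
      fun_prop
    · filter_upwards [q.ae (hb n)] with p hp
      have h1 := norm_sub_le (Gs n p.1) p.2
      have h2 : ‖Gs n p.1 - p.2‖ ^ 2 ≤ (‖Gs n p.1‖ + ‖p.2‖) ^ 2 := by gcongr
      simp only [Real.norm_eq_abs, abs_of_nonneg (sq_nonneg ‖Gs n p.1 - p.2‖)]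
      nlinarith [sq_nonneg (‖Gs n p.1‖ - ‖p.2‖)]
    · filter_upwards [q.ae hlim] with p hp
      exact ((hp.sub_const p.2).norm).pow 2

lemma tCost_nonneg {d : ℕ} (π : Measure (Euc d × Euc d)) : 0 ≤ tCost π :=
  integral_nonneg fun _ => sq_nonneg _

lemma W2sq_le {d : ℕ} {μ ν : Measure (Euc d)} {π : Measure (Euc d × Euc d)}
    (h : π ∈ Coupling μ ν) : W2sq μ ν ≤ tCost π :=
  csInf_le ⟨0, by rintro _ ⟨π, -, rfl⟩; exact tCost_nonneg π⟩ ⟨π, h, rfl⟩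

lemma opt_limit {d : ℕ} {Ω : Type*} [MeasurableSpace Ω] (L : Measure Ω) [IsProbabilityMeasure L]
    (Gs : ℕ → Ω → Euc d) (G : Ω → Euc d) (hGs : ∀ n, Measurable (Gs n)) (hG : Measurable G)
    (H : Ω → ℝ) (hH : Integrable H L)
    (hb : ∀ n, ∀ᵐ t ∂L, ‖Gs n t‖ ^ 2 ≤ H t)
    (hlim : ∀ᵐ t ∂L, Tendsto (fun n => Gs n t) atTop (𝓝 (G t)))
    (hw : ∀ f : BoundedContinuousFunction (Euc d) ℝ,
      Tendsto (fun n => ∫ x, f x ∂(L.map (Gs n))) atTop (𝓝 (∫ x, f x ∂(L.map G))))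
    (μ : Measure (Euc d)) (hμ : μ ∈ (P2 : Set (Measure (Euc d))))
    (πs : ℕ → ProbabilityMeasure (Euc d × Euc d)) (π : ProbabilityMeasure (Euc d × Euc d))
    (hπs : ∀ n, (πs n : Measure (Euc d × Euc d)) ∈ OptPlan (L.map (Gs n)) μ)
    (hπ : Tendsto πs atTop (𝓝 π)) :
    (π : Measure (Euc d × Euc d)) ∈ OptPlan (L.map G) μ := by
  have pG : IsProbabilityMeasure (L.map G) := Measure.isProbabilityMeasure_map hG.aemeasurable
  have pGs : ∀ n, IsProbabilityMeasure (L.map (Gs n)) := fun n =>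
    Measure.isProbabilityMeasure_map (hGs n).aemeasurable
  have pμ := hμ.1
  have c1 : (π : Measure (Euc d × Euc d)).map Prod.fst = L.map G := by
    have t1 := ProbabilityMeasure.tendsto_map_of_tendsto_of_continuous πs π hπ continuous_fst
    have t2 : Tendsto (fun n => mkP (L.map (Gs n)) (pGs n)) atTop
        (𝓝 (mkP (L.map G) pG)) := ProbabilityMeasure.tendsto_iff_forall_integral_tendsto.2 hw
    have e : (fun n => (πs n).map (f := Prod.fst) (continuous_fst.measurable.aemeasurable)) =
        fun n => mkP (L.map (Gs n)) (pGs n) := by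
      funext n
      exact Subtype.ext (hπs n).1.2.1
    rw [e] at t1
    have e2 := tendsto_nhds_unique t1 t2
    exact congrArg (fun m : ProbabilityMeasure (Euc d) => (m : Measure (Euc d))) e2
  have c2 : (π : Measure (Euc d × Euc d)).map Prod.snd = μ := by
    have t1 := ProbabilityMeasure.tendsto_map_of_tendsto_of_continuous πs π hπ continuous_snd
    have e : (fun n => (πs n).map (f := Prod.snd) (continuous_snd.measurable.aemeasurable)) =
        fun n => mkP μ pμ := by
      funext n
      exact Subtype.ext (hπs n).1.2.2
    rw [e] at t1
    have e2 := tendsto_nhds_unique t1 tendsto_const_nhds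
    exact congrArg (fun m : ProbabilityMeasure (Euc d) => (m : Measure (Euc d))) e2
  have c : (π : Measure (Euc d × Euc d)) ∈ Coupling (L.map G) μ := ⟨inferInstance, c1, c2⟩
  refine ⟨c, le_antisymm ?_ (W2sq_le c)⟩
  refine le_csInf ⟨_, _, c, rfl⟩ ?_
  rintro _ ⟨π', hπ', rfl⟩
  obtain ⟨πs', h1, h2⟩ := recovery L Gs G hGs hG H hH hb hlim μ hμ π' hπ'
  refine lsc_integral πs π hπ (fun p => ‖p.1 - p.2‖ ^ 2) (by fun_prop) (fun p => sq_nonneg _)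
    (fun n => ?_) _ _ (fun n => ?_) h2
  · refine integrable_sq_sub _ _ _ (by fun_prop) (by fun_prop) ?_ ?_
    · refine integrable_of_map _ _ measurable_fst _ (hπs n).1.2.1 ?_
      refine (integrable_map_measure (by fun_prop) (hGs n).aemeasurable).2 ?_
      refine hH.mono' (((hGs n).norm.pow_const 2).aestronglyMeasurable) ?_
      filter_upwards [hb n] with t ht
      simpa using ht
    · exact integrable_of_map _ _ measurable_snd _ (hπs n).1.2.2 hμ.2
  · exact (hπs n).2.le.trans (W2sq_le (h1 n))

lemma gamma_limit {d : ℕ} {Ω : Type*} [MeasurableSpace Ω] (L : Measure Ω) [IsProbabilityMeasure L]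
    (Gs : ℕ → Ω → Euc d) (G : Ω → Euc d) (hGs : ∀ n, Measurable (Gs n)) (hG : Measurable G)
    (H : Ω → ℝ) (hH : Integrable H L)
    (hb : ∀ n, ∀ᵐ t ∂L, ‖Gs n t‖ ^ 2 ≤ H t)
    (hlim : ∀ᵐ t ∂L, Tendsto (fun n => Gs n t) atTop (𝓝 (G t)))
    (μ1 μ2 : Measure (Euc d)) (h1 : μ1 ∈ (P2 : Set (Measure (Euc d))))
    (h2 : μ2 ∈ (P2 : Set (Measure (Euc d))))
    (ρs : ℕ → Measure (Euc d × Euc d × Euc d))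
    (hρs : ∀ n, ρs n ∈ Gamma (L.map (Gs n)) μ1 μ2)
    (b : ℕ → ℝ) (B : ℝ) (hρb : ∀ n, pivotCost (ρs n) ≤ b n) (hB : Tendsto b atTop (𝓝 B)) :
    ∃ ρ ∈ Gamma (L.map G) μ1 μ2, pivotCost ρ ≤ B := by
  have pG : IsProbabilityMeasure (L.map G) := Measure.isProbabilityMeasure_map hG.aemeasurable
  have pGs : ∀ n, IsProbabilityMeasure (L.map (Gs n)) := fun n =>
    Measure.isProbabilityMeasure_map (hGs n).aemeasurable
  have pμ1 := h1.1
  have pμ2 := h2.1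
  have hw : ∀ f : BoundedContinuousFunction (Euc d) ℝ,
      Tendsto (fun n => ∫ x, f x ∂(L.map (Gs n))) atTop (𝓝 (∫ x, f x ∂(L.map G))) := by
    intro f
    have e : ∀ g : Ω → Euc d, Measurable g → ∫ x, f x ∂(L.map g) = ∫ t, f (g t) ∂L :=
      fun g hg => integral_map hg.aemeasurable f.continuous.measurable.aestronglyMeasurable
    rw [e G hG]
    simp_rw [fun n => e (Gs n) (hGs n)]
    refine tendsto_integral_of_dominated_convergence (fun _ => ‖f‖) (fun n => ?_)
      (integrable_const _) (fun n => Eventually.of_forall fun t => f.norm_coe_le_norm _) ?_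
    · exact (f.continuous.measurable.comp (hGs n)).aestronglyMeasurable
    · filter_upwards [hlim] with t ht
      exact (f.continuous.tendsto _).comp ht
  -- marginals
  have m1 : ∀ n, (ρs n).map (fun p => p.1) = L.map (Gs n) := by
    intro n
    rw [← (hρs n).2.1.1.2.1, Measure.map_map (by fun_prop) (by fun_prop)]
    rfl
  have m2 : ∀ n, (ρs n).map (fun p => p.2.1) = μ1 := by
    intro n
    rw [← (hρs n).2.1.1.2.2, Measure.map_map (by fun_prop) (by fun_prop)]
    rfl
  have m3 : ∀ n, (ρs n).map (fun p => p.2.2) = μ2 := by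
    intro n
    rw [← (hρs n).2.2.1.2.2, Measure.map_map (by fun_prop) (by fun_prop)]
    rfl
  -- tightness
  have tν : IsTightMeasureSet (Set.range fun n => L.map (Gs n)) := by
    have t2 : Tendsto (fun n => mkP (L.map (Gs n)) (pGs n)) atTop
        (𝓝 (mkP (L.map G) pG)) := ProbabilityMeasure.tendsto_iff_forall_integral_tendsto.2 hw
    have := isTightMeasureSet_of_isCompact_closure
      (t2.isCompact_insert_range.closure_of_subset (Set.subset_insert _ _))
    refine this.subset ?_
    rintro _ ⟨n, rfl⟩
    exact ⟨mkP (L.map (Gs n)) (pGs n), ⟨n, rfl⟩, rfl⟩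
  have tρ : IsTightMeasureSet (Set.range ρs) := by
    refine IsTightMeasureSet.prodMk (tν.subset ?_) (IsTightMeasureSet.prodMk
      ((isTightMeasureSet_singleton (μ := μ1)).subset ?_)
      ((isTightMeasureSet_singleton (μ := μ2)).subset ?_))
    · rintro _ ⟨_, ⟨n, rfl⟩, rfl⟩
      exact ⟨n, (m1 n).symm⟩
    · rintro _ ⟨_, ⟨_, ⟨n, rfl⟩, rfl⟩, rfl⟩
      rw [Set.mem_singleton_iff, ← m2 n, Measure.fst, Measure.snd,
        Measure.map_map (by fun_prop) (by fun_prop)]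
      rfl
    · rintro _ ⟨_, ⟨_, ⟨n, rfl⟩, rfl⟩, rfl⟩
      rw [Set.mem_singleton_iff, ← m3 n, Measure.snd, Measure.snd,
        Measure.map_map (by fun_prop) (by fun_prop)]
      rfl
  set P : ℕ → ProbabilityMeasure (Euc d × Euc d × Euc d) := fun n => mkP (ρs n) (hρs n).1 with hP
  have hcomp : IsCompact (closure (Set.range P)) := by
    refine isCompact_closure_of_isTightMeasureSet (tρ.subset ?_)
    rintro _ ⟨_, ⟨n, rfl⟩, rfl⟩
    exact ⟨n, rfl⟩
  obtain ⟨ρ, -, φ, hφ, hρ⟩ := hcomp.tendsto_subseq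
    (fun n => subset_closure (Set.mem_range_self n) : ∀ n, P n ∈ closure (Set.range P))
  have cφ := hφ.tendsto_atTop
  have hlim' : ∀ᵐ t ∂L, Tendsto (fun n => Gs (φ n) t) atTop (𝓝 (G t)) := by
    filter_upwards [hlim] with t ht
    exact ht.comp cφ
  have hw' := fun f : BoundedContinuousFunction (Euc d) ℝ => (hw f).comp cφ
  refine ⟨ρ, ⟨inferInstance, ?_, ?_⟩, ?_⟩
  · have c : Continuous (fun p : Euc d × Euc d × Euc d => (p.1, p.2.1)) := by fun_prop
    exact opt_limit L (fun n => Gs (φ n)) G (fun n => hGs _) hG H hH (fun n => hb _) hlim' hw' μ1 h1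
      (fun n => (P (φ n)).map c.measurable.aemeasurable) (ρ.map c.measurable.aemeasurable)
      (fun n => (hρs (φ n)).2.1)
      (ProbabilityMeasure.tendsto_map_of_tendsto_of_continuous _ ρ hρ c)
  · have c : Continuous (fun p : Euc d × Euc d × Euc d => (p.1, p.2.2)) := by fun_prop
    exact opt_limit L (fun n => Gs (φ n)) G (fun n => hGs _) hG H hH (fun n => hb _) hlim' hw' μ2 h2
      (fun n => (P (φ n)).map c.measurable.aemeasurable) (ρ.map c.measurable.aemeasurable)
      (fun n => (hρs (φ n)).2.2)
      (ProbabilityMeasure.tendsto_map_of_tendsto_of_continuous _ ρ hρ c)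
  · refine lsc_integral _ ρ hρ (fun p => ‖p.2.1 - p.2.2‖ ^ 2) (by fun_prop) (fun p => sq_nonneg _)
      (fun n => ?_) _ _ (fun n => hρb (φ n)) (hB.comp cφ)
    refine integrable_sq_sub _ _ _ (by fun_prop) (by fun_prop) ?_ ?_
    · exact integrable_of_map _ _ (by fun_prop) _ (m2 (φ n)) h1.2
    · exact integrable_of_map _ _ (by fun_prop) _ (m3 (φ n)) h2.2

/-- the infimum over `θ ∈ S^{d-1}` defining the Min-Pivot Sliced
discrepancy is attained. -/
theorem minPS_attained {d : ℕ} (hd : 0 < d) (μ1 μ2 : Measure (Euc d))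
    (h1 : μ1 ∈ (P2 : Set (Measure (Euc d)))) (h2 : μ2 ∈ (P2 : Set (Measure (Euc d)))) :
    ∃ θ : Euc d, ‖θ‖ = 1 ∧
      ∀ θ' : Euc d, ‖θ'‖ = 1 → PSsq θ μ1 μ2 ≤ PSsq θ' μ1 μ2 := by

  have bdd : ∀ ν : Measure (Euc d), BddBelow (pivotCost '' Gamma ν μ1 μ2) := fun ν =>
    ⟨0, by rintro _ ⟨ρ, -, rfl⟩; exact integral_nonneg fun _ => sq_nonneg _⟩
  have nonneg : ∀ θ : Euc d, 0 ≤ PSsq θ μ1 μ2 := fun θ =>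
    Real.sInf_nonneg (by rintro _ ⟨ρ, -, rfl⟩; exact integral_nonneg fun _ => sq_nonneg _)
  by_cases hemp : ∃ θ : Euc d, ‖θ‖ = 1 ∧ ¬ (Gamma (pivotMiddle θ μ1 μ2) μ1 μ2).Nonempty
  · obtain ⟨θ, hθ, he⟩ := hemp
    refine ⟨θ, hθ, fun θ' _ => ?_⟩
    have : PSsq θ μ1 μ2 = 0 := by
      unfold PSsq Wnusq
      rw [Set.not_nonempty_iff_eq_empty.1 he]
      simp
    rw [this]
    exact nonneg θ'
  push Not at hemp
  have p1 := h1.1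
  have p2 := h2.1
  set L := volume.restrict (Set.Icc (0:ℝ) 1) with hL
  set S : Set ℝ := (fun θ => PSsq θ μ1 μ2) '' Metric.sphere (0 : Euc d) 1 with hS
  have hSb : BddBelow S := ⟨0, by rintro _ ⟨θ, -, rfl⟩; exact nonneg θ⟩
  have hSn : S.Nonempty := by
    refine ⟨_, EuclideanSpace.single ⟨0, hd⟩ 1, ?_, rfl⟩
    simp
  obtain ⟨u, -, hu, huS⟩ := exists_seq_tendsto_sInf hSn hSb
  choose θ0 hθ0 hθu using huS
  obtain ⟨θ, hθ, φ, hφ, hlimθ⟩ := (isCompact_sphere (0 : Euc d) 1).tendsto_subseq hθ0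
  have hθ1 : ‖θ‖ = 1 := by simpa using hθ
  have hθs1 : ∀ n, ‖θ0 (φ n)‖ = 1 := fun n => by simpa using hθ0 (φ n)
  refine ⟨θ, hθ1, fun θ' hθ' => ?_⟩
  have hmin : sInf S ≤ PSsq θ' μ1 μ2 := csInf_le hSb ⟨θ', by simpa using hθ', rfl⟩
  refine le_trans ?_ hmin
  -- near-optimal plans
  have hex : ∀ n : ℕ, ∃ ρ ∈ Gamma (pivotMiddle (θ0 (φ n)) μ1 μ2) μ1 μ2,
      pivotCost ρ ≤ u (φ n) + 1 / ((n : ℝ) + 1) := by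
    intro n
    have hne := (hemp _ (hθs1 n)).image pivotCost
    have hlt : sInf (pivotCost '' Gamma (pivotMiddle (θ0 (φ n)) μ1 μ2) μ1 μ2)
        < u (φ n) + 1 / ((n : ℝ) + 1) := by
      have e : sInf (pivotCost '' Gamma (pivotMiddle (θ0 (φ n)) μ1 μ2) μ1 μ2) = u (φ n) :=
        hθu (φ n)
      rw [e]
      have : (0:ℝ) < 1 / ((n : ℝ) + 1) := by positivity
      linarith
    obtain ⟨_, ⟨ρ, hρ, rfl⟩, hlt⟩ := exists_lt_of_csInf_lt hne hlt
    exact ⟨ρ, hρ, hlt.le⟩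
  choose ρs hρs hρb using hex
  have hB : Tendsto (fun n : ℕ => u (φ n) + 1 / ((n : ℝ) + 1)) atTop (𝓝 (sInf S)) := by
    have := (hu.comp hφ.tendsto_atTop).add (tendsto_one_div_add_atTop_nhds_zero_nat (𝕜 := ℝ))
    simpa using this
  -- the quantile maps
  have pp : ∀ (μ : Measure (Euc d)) [IsProbabilityMeasure μ] (θ : Euc d),
      IsProbabilityMeasure (projLine θ μ) := fun μ _ θ =>
    Measure.isProbabilityMeasure_map (by fun_prop)
  set g : Euc d → ℝ → Euc d := fun θ t => ((1 / 2) * quantile (projLine θ μ1) t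
      + (1 / 2) * quantile (projLine θ μ2) t) • θ with hg
  have hgm : ∀ θ, AEMeasurable (g θ) L := fun θ =>
    ((((quantile_aem (projLine θ μ1)).const_mul _).add
      ((quantile_aem (projLine θ μ2)).const_mul _))).smul_const θ
  obtain ⟨H1, hH1, hq1⟩ := exists_bound μ1 h1
  obtain ⟨H2, hH2, hq2⟩ := exists_bound μ2 h2
  have hmap : ∀ θ, L.map ((hgm θ).mk (g θ)) = pivotMiddle θ μ1 μ2 := fun θ =>
    Measure.map_congr (hgm θ).ae_eq_mk.symm
  have hbd : ∀ n, ∀ᵐ t ∂L, ‖(hgm (θ0 (φ n))).mk (g (θ0 (φ n))) t‖ ^ 2 ≤ (H1 t + H2 t) ^ 2 := by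
    intro n
    have hio : ∀ᵐ t ∂L, t ∈ Set.Ioo (0:ℝ) 1 := by
      rw [hL, restr_eq]
      exact ae_restrict_mem measurableSet_Ioo
    filter_upwards [hio, (hgm (θ0 (φ n))).ae_eq_mk] with t ht he
    rw [← he, hg]
    simp only [norm_smul, hθs1 n, mul_one, Real.norm_eq_abs]
    have a1 := hq1 _ (hθs1 n) t ht
    have a2 := hq2 _ (hθs1 n) t ht
    have n1 := abs_nonneg (quantile (projLine (θ0 (φ n)) μ1) t)
    have n2 := abs_nonneg (quantile (projLine (θ0 (φ n)) μ2) t)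
    refine pow_le_pow_left₀ (abs_nonneg _) ?_ 2
    refine (abs_add_le _ _).trans ?_
    rw [abs_mul, abs_mul, abs_of_pos (by norm_num : (0:ℝ) < 1 / 2)]
    linarith
  have hlm : ∀ᵐ t ∂L, Tendsto (fun n => (hgm (θ0 (φ n))).mk (g (θ0 (φ n))) t) atTop
      (𝓝 ((hgm θ).mk (g θ) t)) := by
    have hall : ∀ᵐ t ∂L, ∀ n, g (θ0 (φ n)) t = (hgm (θ0 (φ n))).mk (g (θ0 (φ n))) t :=
      ae_all_iff.2 fun n => (hgm (θ0 (φ n))).ae_eq_mk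
    filter_upwards [hall, (hgm θ).ae_eq_mk, tendsto_quantile_ae μ1 _ θ hlimθ,
      tendsto_quantile_ae μ2 _ θ hlimθ] with t ha he t1 t2
    rw [← he]
    simp_rw [← ha]
    exact ((t1.const_mul _).add (t2.const_mul _)).smul hlimθ
  obtain ⟨ρ, hρ, hρB⟩ := gamma_limit L (fun n => (hgm (θ0 (φ n))).mk (g (θ0 (φ n))))
    ((hgm θ).mk (g θ)) (fun n => (hgm _).measurable_mk) (hgm θ).measurable_mk
    (fun t => (H1 t + H2 t) ^ 2) (hH1.add hH2).integrable_sq hbd hlm μ1 μ2 h1 h2 ρs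
    (fun n => by rw [hmap]; exact hρs n) _ _ hρb hB
  rw [hmap] at hρ
  exact (csInf_le (bdd _) ⟨ρ, hρ, rfl⟩).trans hρB

end
end
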